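/- For every Cayley tree T labelled with [n]_0, the preference sequence π_T, defined by π_T(i) = ω_T^{-1}(f_T(i)) + 1 for i ∈ {1,…,n}, is a parking function of length n. -/

import Mathlib

/-!
In the parking process with preferences `π_T`, car `c` parks exactly at the spot `ω_T⁻¹(c)`,
the step at which the priority-first search visits the vertex `c`; since `ω_T` is a permutation
of `{1,…,n}`, all cars park.

The claim is proved by induction on `c` (`spotList_pref`). The spot `ω_T⁻¹(c)` is at least
`π_T(c)` because a vertex is visited after its parent (`pref_le_wearyInv`), and it is free because
`ω_T` is injective. Every spot `s` with `π_T(c) ≤ s < ω_T⁻¹(c)` is taken: at step `s` the vertex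
`c` was available and was not chosen, so the vertex visited is smaller than `c` (`visit_lt`), and
the car with that label has already parked at `s`. That `ω_T` is a permutation rests on the search
never getting stuck before step `n` (`avail_nonempty`).
-/

open scoped Classical

namespace WearyParking

/-- `f` is the parent function of a Cayley tree on `{0,…,n}` rooted at `0`:
`f 0 = 0`, `f` is pinned to `0` outside `{1,…,n}`, `f` maps `{1,…,n}` into `{0,…,n}`,
and every vertex reaches the root under iteration. -/
def IsCayleyTree (n : ℕ) (f : ℕ → ℕ) : Prop :=
  f 0 = 0 ∧ (∀ i, n < i → f i = 0) ∧
  (∀ i, 1 ≤ i → i ≤ n → f i ≤ n) ∧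
  (∀ i, 1 ≤ i → i ≤ n → ∃ k, f^[k] i = 0)

/-- A non-root vertex `i` is a record of the tree if it is greater than
all of its ancestors. -/
def IsRecord (n : ℕ) (f : ℕ → ℕ) (i : ℕ) : Prop :=
  1 ≤ i ∧ i ≤ n ∧ ∀ k, 1 ≤ k → f^[k] i < i

/-- The smallest record larger than `i`. -/
noncomputable def nextRecord (n : ℕ) (f : ℕ → ℕ) (i : ℕ) : ℕ :=
  sInf {j | IsRecord n f j ∧ i < j}

/-- The record (blob) code of the tree, a function on `{1,…,n-1}`:
at a non-record position it records the parent, and at a record position it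
records the parent of the next record. -/
noncomputable def blob (n : ℕ) (f : ℕ → ℕ) (i : ℕ) : ℕ :=
  if IsRecord n f i then f (nextRecord n f i) else f i

/-- Number of children of vertex `v` in the tree. -/
def numChildren (n : ℕ) (f : ℕ → ℕ) (v : ℕ) : ℕ :=
  ((Finset.Icc 1 n).filter fun i => f i = v).card

/-- The list of the first `i+1` vertices visited by the priority-first search:
start at the root `0`; at each step visit the smallest unvisited vertex whose
parent has been visited. -/
noncomputable def wearyList (n : ℕ) (f : ℕ → ℕ) : ℕ → List ℕ
  | 0 => [0]
  | (i + 1) =>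
      wearyList n f i ++
        [sInf {v | 1 ≤ v ∧ v ≤ n ∧ v ∉ wearyList n f i ∧ f v ∈ wearyList n f i}]

/-- The weary permutation of the tree: `weary n f i` is the `i`-th vertex visited
by the priority-first search (with `weary n f 0 = 0`). -/
noncomputable def weary (n : ℕ) (f : ℕ → ℕ) (i : ℕ) : ℕ :=
  (wearyList n f n).getD i 0

/-- The inverse of the weary permutation. -/
noncomputable def wearyInv (n : ℕ) (f : ℕ → ℕ) (v : ℕ) : ℕ :=
  sInf {i | weary n f i = v}

/-- The preference sequence `π_T` of the tree: `π_T i = ω_T⁻¹ (f_T i) + 1`. -/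
noncomputable def pref (n : ℕ) (f : ℕ → ℕ) (i : ℕ) : ℕ :=
  wearyInv n f (f i) + 1

/-- Parent function of the priority tree `pt(T)`: `ω_T⁻¹ ∘ f_T ∘ ω_T`. -/
noncomputable def prioParent (n : ℕ) (f : ℕ → ℕ) (i : ℕ) : ℕ :=
  wearyInv n f (f (weary n f i))

/-- The list of spots occupied by cars `1,…,c` in the classical parking process:
car `c` parks at the first spot `≥ π c` not occupied by an earlier car. -/
noncomputable def spotList (π : ℕ → ℕ) : ℕ → List ℕ
  | 0 => []
  | (c + 1) => spotList π c ++ [sInf {s | π (c + 1) ≤ s ∧ s ∉ spotList π c}]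

/-- The spot where car `c` ends up in the classical parking process. -/
noncomputable def spot (π : ℕ → ℕ) (c : ℕ) : ℕ :=
  (spotList π c).getD (c - 1) 0

/-- `π` is a parking function of length `n`: preferences lie in `{1,…,n}`
(pinned to `1` outside `{1,…,n}`) and every car parks within the `n` spots. -/
def IsParkingFun (n : ℕ) (π : ℕ → ℕ) : Prop :=
  (∀ c, 1 ≤ c → c ≤ n → 1 ≤ π c ∧ π c ≤ n) ∧
  (∀ c, c = 0 ∨ n < c → π c = 1) ∧
  (∀ c, 1 ≤ c → c ≤ n → spot π c ≤ n)

/-- The bird's-eye permutation `ω_π`: the car parked at spot `i` (and `0` at `0`). -/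
noncomputable def birdsEye (n : ℕ) (π : ℕ → ℕ) (i : ℕ) : ℕ :=
  if i = 0 then 0 else sInf {c | 1 ≤ c ∧ c ≤ n ∧ spot π c = i}

/-- The inverse of the bird's-eye permutation. -/
noncomputable def birdsEyeInv (n : ℕ) (π : ℕ → ℕ) (c : ℕ) : ℕ :=
  sInf {i | birdsEye n π i = c}

/-- Parent function of the parking tree `PT(π)`: `f_π i = ω_π (π i - 1)`. -/
noncomputable def ptParent (n : ℕ) (π : ℕ → ℕ) (i : ℕ) : ℕ :=
  if 1 ≤ i ∧ i ≤ n then birdsEye n π (π i - 1) else 0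

/-- `v` is a record of the parking function `π`, i.e. a left-to-right maximum of
the word `ω_π(1) ω_π(2) ⋯ ω_π(n)`. -/
def IsPfRecord (n : ℕ) (π : ℕ → ℕ) (v : ℕ) : Prop :=
  ∃ i, 1 ≤ i ∧ i ≤ n ∧ birdsEye n π i = v ∧ ∀ j, 1 ≤ j → j < i → birdsEye n π j < v

/-- The waiting time of the tree: `wait T = Σ_{i=1}^n (i - f_{pt(T)}(i))`. -/
noncomputable def wait (n : ℕ) (f : ℕ → ℕ) : ℕ :=
  ∑ i ∈ Finset.Icc 1 n, (i - prioParent n f i)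

/-- The number of priority small ascents of the tree. -/
noncomputable def psa (n : ℕ) (f : ℕ → ℕ) : ℕ :=
  ((Finset.Icc 1 n).filter fun i => prioParent n f i = i - 1).card

/-- The number of children of the root. -/
def degRoot (n : ℕ) (f : ℕ → ℕ) : ℕ := numChildren n f 0

/-- The children sequence: `chseq n f j` is the number of vertices with exactly
`j` children. -/
def chseq (n : ℕ) (f : ℕ → ℕ) (j : ℕ) : ℕ :=
  ((Finset.Icc 0 n).filter fun v => numChildren n f v = j).card

/-- The number of probes of the parking function: `n` plus the total displacement. -/
noncomputable def probes (n : ℕ) (π : ℕ → ℕ) : ℕ :=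
  n + ∑ c ∈ Finset.Icc 1 n, (spot π c - π c)

/-- The number of lucky cars of `π`: cars parking at their preferred spot. -/
noncomputable def lucky (n : ℕ) (π : ℕ → ℕ) : ℕ :=
  ((Finset.Icc 1 n).filter fun c => spot π c = π c).card

/-- The number of `1`s in `π`. -/
def ones (n : ℕ) (π : ℕ → ℕ) : ℕ :=
  ((Finset.Icc 1 n).filter fun c => π c = 1).card

/-- The multiplicity of the value `v` in the parking function `π`. -/
def multIn (n : ℕ) (π : ℕ → ℕ) (v : ℕ) : ℕ :=
  ((Finset.Icc 1 n).filter fun c => π c = v).card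

/-- The multiplicity sequence: `multSeq n π j` is the number of values in
`{1,…,n+1}` appearing exactly `j` times in `π`. -/
def multSeq (n : ℕ) (π : ℕ → ℕ) (j : ℕ) : ℕ :=
  ((Finset.Icc 1 (n + 1)).filter fun v => multIn n π v = j).card

/-- The tree is a path graph with endpoints `0` and `n`: every vertex has at most
one child and `n` is the (unique) leaf. -/
def IsPathTree (n : ℕ) (f : ℕ → ℕ) : Prop :=
  (∀ v, v ≤ n → numChildren n f v ≤ 1) ∧ numChildren n f n = 0

/-- `g` is the parent map of a rooted forest on `{1,…,n}` rooted at `{1,…,k}`: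
the vertices `1,…,k` are roots (fixed points), every other vertex of `{1,…,n}` has a
parent in `{1,…,n}`, every vertex reaches one of the roots under iteration, and `g`
is pinned to `0` outside `{1,…,n}`. -/
def IsForestRootedAt (n k : ℕ) (g : ℕ → ℕ) : Prop :=
  (∀ i, 1 ≤ i → i ≤ k → g i = i) ∧
  (∀ i, k < i → i ≤ n → 1 ≤ g i ∧ g i ≤ n) ∧
  (∀ i, 1 ≤ i → i ≤ n → ∃ m, 1 ≤ g^[m] i ∧ g^[m] i ≤ k) ∧
  (∀ i, i = 0 ∨ n < i → g i = 0)

theorem wearyList_length (n : ℕ) (f : ℕ → ℕ) (i : ℕ) : (wearyList n f i).length = i + 1 := by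
  induction i with
  | zero => simp [wearyList]
  | succ i ih => simp [wearyList, ih]

/-- The vertex visited at step `i` of the priority-first search, defined for every `i`
without reference to the total number `n` of steps. For `i ≤ n` it equals `weary n f i`. -/
noncomputable def visit (n : ℕ) (f : ℕ → ℕ) (i : ℕ) : ℕ := (wearyList n f i).getD i 0

theorem visit_zero (n : ℕ) (f : ℕ → ℕ) : visit n f 0 = 0 := by simp [visit, wearyList]

/-- The vertices available to the search once steps `0, …, i` have been carried out. -/
def avail (n : ℕ) (f : ℕ → ℕ) (i : ℕ) : Set ℕ :=
  {v | 1 ≤ v ∧ v ≤ n ∧ v ∉ wearyList n f i ∧ f v ∈ wearyList n f i}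

theorem visit_succ (n : ℕ) (f : ℕ → ℕ) (i : ℕ) : visit n f (i + 1) = sInf (avail n f i) := by
  have h := wearyList_length n f i
  simp [visit, wearyList, avail, List.getD_eq_getElem?_getD, h]

theorem wearyList_eq (n : ℕ) (f : ℕ → ℕ) (i : ℕ) :
    wearyList n f i = (List.range (i + 1)).map (visit n f) := by
  induction i with
  | zero => simp [wearyList, visit_zero]
  | succ i ih =>
    rw [List.range_succ, List.map_append, ← ih, List.map_singleton, visit_succ]
    rfl

theorem mem_wearyList {n : ℕ} {f : ℕ → ℕ} {i v : ℕ} :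
    v ∈ wearyList n f i ↔ ∃ j ≤ i, visit n f j = v := by
  simp [wearyList_eq]

theorem weary_eq_visit {n : ℕ} {f : ℕ → ℕ} {i : ℕ} (hi : i ≤ n) :
    weary n f i = visit n f i := by
  have : i < n + 1 := by omega
  simp [weary, wearyList_eq, List.getD_eq_getElem?_getD, this]

theorem visit_le (n : ℕ) (f : ℕ → ℕ) (i : ℕ) : visit n f i ≤ n := by
  cases i with
  | zero => simp [visit_zero]
  | succ i =>
    rw [visit_succ]
    rcases (avail n f i).eq_empty_or_nonempty with h | h
    · simp [h]
    · exact (Nat.sInf_mem h).2.1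

/-- The search does not get stuck before step `n`: on the path from an unvisited vertex to
the root, the last unvisited vertex is available. -/
theorem avail_nonempty {n : ℕ} {f : ℕ → ℕ} (hf : IsCayleyTree n f) {i : ℕ} (hi : i < n) :
    (avail n f i).Nonempty := by
  obtain ⟨h0, -, hle, hk⟩ := hf
  have hzero : 0 ∈ wearyList n f i := mem_wearyList.2 ⟨0, Nat.zero_le _, visit_zero n f⟩
  obtain ⟨v, hvn, hv⟩ : ∃ v ∈ Finset.range (n + 1), v ∉ (wearyList n f i).toFinset := by
    apply Finset.exists_mem_notMem_of_card_lt_card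
    have := List.toFinset_card_le (wearyList n f i)
    rw [wearyList_length] at this
    rw [Finset.card_range]
    omega
  rw [Finset.mem_range, Nat.lt_succ_iff] at hvn
  rw [List.mem_toFinset] at hv
  have hv1 : 1 ≤ v := Nat.one_le_iff_ne_zero.2 fun h => hv (h ▸ hzero)
  have hex : ∃ k, f^[k] v ∈ wearyList n f i := by
    obtain ⟨k, hk⟩ := hk v hv1 hvn
    exact ⟨k, hk ▸ hzero⟩
  have hiter : ∀ k, f^[k] v ≤ n := by
    intro k
    induction k with
    | zero => exact hvn
    | succ k ih =>
      rw [Function.iterate_succ_apply']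
      rcases Nat.eq_zero_or_pos (f^[k] v) with h | h
      · rw [h, h0]; exact Nat.zero_le _
      · exact hle _ h ih
  obtain ⟨m, hm, hmin⟩ : ∃ m, f^[m + 1] v ∈ wearyList n f i ∧ f^[m] v ∉ wearyList n f i := by
    rcases hfind : Nat.find hex with _ | m
    · have := Nat.find_spec hex
      rw [hfind] at this
      exact absurd this hv
    · exact ⟨m, hfind ▸ Nat.find_spec hex, Nat.find_min hex (by omega)⟩
  rw [Function.iterate_succ_apply'] at hm
  exact ⟨f^[m] v, Nat.one_le_iff_ne_zero.2 fun h => hmin (h ▸ hzero), hiter m, hmin, hm⟩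

theorem visit_isLeast {n : ℕ} {f : ℕ → ℕ} (hf : IsCayleyTree n f) {i : ℕ} (hi : i < n) :
    IsLeast (avail n f i) (visit n f (i + 1)) := by
  rw [visit_succ]
  exact ⟨Nat.sInf_mem (avail_nonempty hf hi), fun _ h => Nat.sInf_le h⟩

theorem visit_ne_of_lt {n : ℕ} {f : ℕ → ℕ} (hf : IsCayleyTree n f) {i j : ℕ} (hij : i < j)
    (hj : j ≤ n) : visit n f i ≠ visit n f j := by
  obtain ⟨j, rfl⟩ : ∃ k, j = k + 1 := ⟨j - 1, by omega⟩
  exact fun h => (visit_isLeast hf hj).1.2.2.1 (mem_wearyList.2 ⟨i, by omega, h⟩)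

theorem visit_inj {n : ℕ} {f : ℕ → ℕ} (hf : IsCayleyTree n f) {i j : ℕ} (hi : i ≤ n)
    (hj : j ≤ n) (h : visit n f i = visit n f j) : i = j := by
  rcases lt_trichotomy i j with hlt | heq | hlt
  · exact absurd h (visit_ne_of_lt hf hlt hj)
  · exact heq
  · exact absurd h.symm (visit_ne_of_lt hf hlt hi)

theorem exists_visit_eq {n : ℕ} {f : ℕ → ℕ} (hf : IsCayleyTree n f) {v : ℕ} (hv : v ≤ n) :
    ∃ i ≤ n, visit n f i = v := by
  have himage : (Finset.range (n + 1)).image (visit n f) = Finset.range (n + 1) := by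
    apply Finset.eq_of_subset_of_card_le
    · intro v hv
      obtain ⟨i, -, rfl⟩ := Finset.mem_image.1 hv
      exact Finset.mem_range.2 (Nat.lt_succ_of_le (visit_le n f i))
    · rw [Finset.card_image_of_injOn]
      intro i hi j hj h
      simp only [Finset.coe_range, Set.mem_Iio, Nat.lt_succ_iff] at hi hj
      exact visit_inj hf hi hj h
  have hmem : v ∈ (Finset.range (n + 1)).image (visit n f) := by
    rw [himage, Finset.mem_range]; omega
  obtain ⟨i, hi, h⟩ := Finset.mem_image.1 hmem
  exact ⟨i, Nat.lt_succ_iff.1 (Finset.mem_range.1 hi), h⟩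

theorem wearyInv_visit {n : ℕ} {f : ℕ → ℕ} (hf : IsCayleyTree n f) {i : ℕ} (hi : i ≤ n) :
    wearyInv n f (visit n f i) = i := by
  refine IsLeast.csInf_eq (s := {j | weary n f j = visit n f i}) ⟨weary_eq_visit hi, ?_⟩
  intro j hj
  -- beyond `n`, `weary` takes a default value, but such indices exceed `i` anyway
  rcases le_or_gt j n with hjn | hjn
  · exact (visit_inj hf hjn hi ((weary_eq_visit hjn).symm.trans hj)).ge
  · omega

theorem wearyInv_le {n : ℕ} {f : ℕ → ℕ} (hf : IsCayleyTree n f) {v : ℕ} (hv : v ≤ n) :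
    wearyInv n f v ≤ n := by
  obtain ⟨i, hi, rfl⟩ := exists_visit_eq hf hv
  rwa [wearyInv_visit hf hi]

/-- A vertex is visited after its parent. -/
theorem pref_le_wearyInv {n : ℕ} {f : ℕ → ℕ} (hf : IsCayleyTree n f) {c : ℕ} (hc1 : 1 ≤ c)
    (hc : c ≤ n) : pref n f c ≤ wearyInv n f c := by
  obtain ⟨q, hq, rfl⟩ := exists_visit_eq hf hc
  rcases q with _ | q
  · rw [visit_zero] at hc1; omega
  obtain ⟨j, hj, hfj⟩ := mem_wearyList.1 (visit_isLeast hf hq).1.2.2.2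
  rw [pref, ← hfj, wearyInv_visit hf (by omega), wearyInv_visit hf hq]
  omega

/-- Between the visit of the parent of `c` and that of `c`, the vertex `c` is available, so
the search only visits vertices smaller than `c`. -/
theorem visit_lt {n : ℕ} {f : ℕ → ℕ} (hf : IsCayleyTree n f) {c s : ℕ} (hc1 : 1 ≤ c)
    (hc : c ≤ n) (hps : pref n f c ≤ s) (hs : s < wearyInv n f c) :
    1 ≤ visit n f s ∧ visit n f s < c := by
  have hfc : f c ≤ n := hf.2.2.1 c hc1 hc
  have hcn := wearyInv_le hf hc
  obtain ⟨q, hq, hqc⟩ := exists_visit_eq hf hc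
  obtain ⟨p, hp, hpc⟩ := exists_visit_eq hf hfc
  rw [pref, ← hpc, wearyInv_visit hf hp] at hps
  rw [← hqc, wearyInv_visit hf hq] at hs
  obtain ⟨s, rfl⟩ : ∃ k, s = k + 1 := ⟨s - 1, by omega⟩
  have hleast := visit_isLeast hf (show s < n by omega)
  refine ⟨hleast.1.1, lt_of_le_of_ne (hleast.2 ⟨hc1, hc, ?_, ?_⟩) ?_⟩
  · intro hmem
    obtain ⟨j, hj, hjc⟩ := mem_wearyList.1 hmem
    have := visit_inj hf (by omega) hq (hjc.trans hqc.symm)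
    omega
  · exact mem_wearyList.2 ⟨p, by omega, hpc⟩
  · rw [← hqc]
    exact visit_ne_of_lt hf hs hq

/-- The cars `1, …, c` park at the spots `ω_T⁻¹(1), …, ω_T⁻¹(c)`, in this order. -/
theorem spotList_pref {n : ℕ} {f : ℕ → ℕ} (hf : IsCayleyTree n f) {c : ℕ} (hc : c ≤ n) :
    spotList (pref n f) c = (List.range c).map fun i => wearyInv n f (i + 1) := by
  induction c with
  | zero => simp [spotList]
  | succ c ih =>
    have ih := ih (by omega)
    have hmem : ∀ s, s ∈ spotList (pref n f) c ↔ ∃ i < c, wearyInv n f (i + 1) = s := by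
      simp [ih]
    have hpark : IsLeast {s | pref n f (c + 1) ≤ s ∧ s ∉ spotList (pref n f) c}
        (wearyInv n f (c + 1)) := by
      refine ⟨⟨pref_le_wearyInv hf (by omega) hc, ?_⟩, ?_⟩
      · rw [hmem]
        rintro ⟨i, hi, h⟩
        obtain ⟨p, hp, hpi⟩ := exists_visit_eq hf (show i + 1 ≤ n by omega)
        obtain ⟨q, hq, hqc⟩ := exists_visit_eq hf hc
        rw [← hpi, ← hqc, wearyInv_visit hf hp, wearyInv_visit hf hq] at h
        subst h
        omega
      · rintro s ⟨hps, hs⟩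
        by_contra! hlt
        obtain ⟨h1, h2⟩ := visit_lt hf (by omega) hc hps hlt
        have hsn := wearyInv_le hf hc
        refine hs ((hmem s).2 ⟨visit n f s - 1, by omega, ?_⟩)
        rw [Nat.sub_add_cancel h1, wearyInv_visit hf (by omega)]
    rw [List.range_succ, List.map_append, ← ih, List.map_singleton, ← hpark.csInf_eq]
    rfl

/-- The preference sequence `π_T(i) = ω_T⁻¹(f_T(i)) + 1` of a
Cayley tree is a parking function of length `n`. -/
theorem stmt12 (n : ℕ) (f : ℕ → ℕ) (hf : IsCayleyTree n f) :
    IsParkingFun n (pref n f) := by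
  refine ⟨fun c hc1 hc => ⟨by simp [pref], ?_⟩, fun c hc => ?_, fun c hc1 hc => ?_⟩
  · exact (pref_le_wearyInv hf hc1 hc).trans (wearyInv_le hf hc)
  · have hfc : f c = 0 := by
      rcases hc with rfl | hc
      · exact hf.1
      · exact hf.2.1 c hc
    have h := wearyInv_visit hf (Nat.zero_le n)
    rw [visit_zero] at h
    rw [pref, hfc, h]
  · obtain ⟨c, rfl⟩ : ∃ k, c = k + 1 := ⟨c - 1, by omega⟩
    have h : spot (pref n f) (c + 1) = wearyInv n f (c + 1) := by
      simp [spot, spotList_pref hf hc, List.getD_eq_getElem?_getD]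
    rw [h]
    exact wearyInv_le hf hc

end WearyParking
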